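/- Let R_l > 0 and L_l > 0 be real numbers. For real parameters P̄, ν̄, ρ̄, define the symmetric 2×2 matrix M(P̄, ν̄, ρ̄) = [[2P̄R_l/L_l − ρ̄, −P̄/L_l + 1/2], [−P̄/L_l + 1/2, −ν̄]]. Then: (i) with P̄ = L_l/2 > 0, ν̄ = 0, and ρ̄ = R_l, the matrix M(L_l/2, 0, R_l) is positive semidefinite; (ii) every triple (P̄, ν̄, ρ̄) with P̄ > 0 and M(P̄, ν̄, ρ̄) positive semidefinite satisfies ν̄ ≤ 0; (iii) if in addition ν̄ = 0, then necessarily P̄ = L_l/2 and ρ̄ ≤ R_l. Hence the maximal feasible passivity indices are ν̄ = 0 and ρ̄ = R_l, attained at P̄ = L_l/2. -/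

import Mathlib

open Matrix

/-- Maximal feasible passivity indices of the transmission-line LMI:
(i) `M(L_l/2, 0, R_l) ⪰ 0`; (ii) feasibility with `P̄ > 0` forces `ν̄ ≤ 0`;
(iii) if moreover `ν̄ = 0` then `P̄ = L_l/2` and `ρ̄ ≤ R_l`. -/
theorem line_passivity_indices_maximal (Rl Ll : ℝ) (hRl : 0 < Rl) (hLl : 0 < Ll)
    (M : ℝ → ℝ → ℝ → Matrix (Fin 2) (Fin 2) ℝ)
    (hM : ∀ P ν ρ, M P ν ρ =
      !![2 * P * Rl / Ll - ρ, -P / Ll + 1 / 2; -P / Ll + 1 / 2, -ν]) :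
    (M (Ll / 2) 0 Rl).PosSemidef ∧
    (∀ P ν ρ, 0 < P → (M P ν ρ).PosSemidef → ν ≤ 0) ∧
    (∀ P ν ρ, 0 < P → (M P ν ρ).PosSemidef → ν = 0 → P = Ll / 2 ∧ ρ ≤ Rl) := by
  refine ⟨?_, ?_, ?_⟩
  · have h : M (Ll / 2) 0 Rl = 0 := by
      rw [hM]
      have h1 : 2 * (Ll / 2) * Rl / Ll - Rl = 0 := by field_simp; ring
      have h2 : -(Ll / 2) / Ll + 1 / 2 = 0 := by field_simp; ring
      rw [h1, h2]
      ext i j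
      fin_cases i <;> fin_cases j <;> simp
    rw [h]
    exact Matrix.PosSemidef.zero
  · intro P ν ρ _ h
    have h1 := h.diag_nonneg (i := 1)
    rw [hM] at h1
    simp at h1
    exact h1
  · intro P ν ρ _ h hν
    subst hν
    have h0 := h.diag_nonneg (i := 0)
    have hd := h.det_nonneg
    rw [hM] at h0 hd
    rw [Matrix.det_fin_two_of] at hd
    have hz : -P / Ll + 1 / 2 = 0 := by
      have : (-P / Ll + 1 / 2) ^ 2 = 0 := le_antisymm (by nlinarith) (sq_nonneg _)
      exact pow_eq_zero_iff (two_ne_zero) |>.1 this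
    have hP : P = Ll / 2 := by
      field_simp at hz
      linarith
    refine ⟨hP, ?_⟩
    have h3 : 0 ≤ 2 * P * Rl / Ll - ρ := by simpa using h0
    have h4 : 2 * P * Rl / Ll = Rl := by
      rw [hP]; field_simp
    linarith
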